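/- For every nonnegative integer n and complex number x such that 1+6x != 0 and 2+6x != 0: sum over k from 0 to n of ((3x)_k (-1-3x)_k (-n)_k)/(k! (-1/2)_k (-3n)_k) * (3/4)^k equals ((1+3x)/2) * ((1/3+x)_n (2/3-x)_n)/((1/3)_n (2/3)_n) + (1/2) * ((2/3+x)_n (1/3-x)_n)/((1/3)_n (2/3)_n) - (3x/2) * ((1+x)_n (-x)_n)/((1/3)_n (2/3)_n). -/

import Mathlib

/-- Pochhammer symbol (rising factorial) `(a)_k`. -/
noncomputable def poch (a : ℂ) (k : ℕ) : ℂ := ∏ j ∈ Finset.range k, (a + j)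

theorem poch_zero (a : ℂ) : poch a 0 = 1 := by simp [poch]

theorem poch_succ (a : ℂ) (k : ℕ) : poch a (k + 1) = poch a k * (a + k) :=
  Finset.prod_range_succ _ _

theorem poch_succ' (a : ℂ) (k : ℕ) : poch a (k + 1) = a * poch (a + 1) k := by
  unfold poch
  rw [Finset.prod_range_succ', mul_comm]
  congr 1
  · simp
  · refine Finset.prod_congr rfl fun j _ => ?_
    push_cast
    ring

theorem poch_mul_add (a : ℂ) (k : ℕ) : poch a k * (a + k) = a * poch (a + 1) k := by
  rw [← poch_succ, poch_succ']

theorem poch_ne_zero {a : ℂ} {k : ℕ} (h : ∀ j < k, a + j ≠ 0) : poch a k ≠ 0 :=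
  Finset.prod_ne_zero_iff.2 fun j hj => h j (Finset.mem_range.1 hj)

theorem poch_ratCast_ne_zero {q : ℚ} {k : ℕ} (h : ∀ j < k, q + j ≠ 0) : poch (q : ℂ) k ≠ 0 :=
  poch_ne_zero fun j hj => by exact_mod_cast h j hj

theorem poch_ratCast_ne_zero_of_pos {q : ℚ} (hq : 0 < q) (k : ℕ) : poch (q : ℂ) k ≠ 0 :=
  poch_ratCast_ne_zero fun j _ => by positivity

theorem poch_half_ne_zero (k : ℕ) : poch (1 / 2) k ≠ 0 := by
  simpa using poch_ratCast_ne_zero_of_pos (q := 1 / 2) (by norm_num) k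

theorem poch_third_ne_zero (k : ℕ) : poch (1 / 3) k ≠ 0 := by
  simpa using poch_ratCast_ne_zero_of_pos (q := 1 / 3) (by norm_num) k

theorem poch_two_thirds_ne_zero (k : ℕ) : poch (2 / 3) k ≠ 0 := by
  simpa using poch_ratCast_ne_zero_of_pos (q := 2 / 3) (by norm_num) k

theorem poch_neg_three_mul_ne_zero {n k : ℕ} (h : k ≤ n) : poch (-(3 * n : ℂ)) k ≠ 0 := by
  refine poch_ne_zero fun j hj h0 => ?_
  have h3 : (j : ℂ) = ((3 * n : ℕ) : ℂ) := by
    push_cast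
    linear_combination h0
  have := Nat.cast_injective h3
  omega

theorem poch_neg_half_mul (k : ℕ) : poch (-1 / 2) k * (1 - 2 * k) = poch (1 / 2) k := by
  have h := poch_mul_add (-1 / 2) k
  rw [show (-1 / 2 + 1 : ℂ) = 1 / 2 by norm_num] at h
  linear_combination (-2) * h

/-- The summand of Gosper's `₃F₂(a, 1 - a, -n; 1/2, -3n; 3/4)`. -/
noncomputable def gosperTerm (a : ℂ) (n k : ℕ) : ℂ :=
  (poch a k * poch (1 - a) k * poch (-(n : ℂ)) k) /
    ((Nat.factorial k : ℂ) * poch (1 / 2) k * poch (-(3 * n : ℂ)) k) * (3 / 4 : ℂ) ^ k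

theorem gosperTerm_zero (a : ℂ) (n : ℕ) : gosperTerm a n 0 = 1 := by
  simp [gosperTerm, poch_zero]

theorem gosperTerm_succ_right (a : ℂ) {n k : ℕ} (h : k + 1 ≤ n) :
    gosperTerm a n (k + 1) * (2 * (k + 1) * (2 * k + 1) * (k - 3 * n)) =
      gosperTerm a n k * (3 * (a + k) * (1 - a + k) * (k - n)) := by
  have hf : (Nat.factorial k : ℂ) ≠ 0 := Nat.cast_ne_zero.2 k.factorial_ne_zero
  have hd := poch_half_ne_zero k
  have he := poch_neg_three_mul_ne_zero (n := n) (k := k) (by omega)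
  have hd' := poch_half_ne_zero (k + 1)
  have he' := poch_neg_three_mul_ne_zero h
  rw [poch_succ] at hd' he'
  have h1 := right_ne_zero_of_mul hd'
  have h2 := right_ne_zero_of_mul he'
  have h3 : (k : ℂ) + 1 ≠ 0 := Nat.cast_add_one_ne_zero k
  unfold gosperTerm
  simp only [poch_succ, Nat.factorial_succ, Nat.cast_mul, Nat.cast_add, Nat.cast_one, pow_succ]
  generalize poch (1 / 2) k = D at *
  generalize poch (-(3 * n : ℂ)) k = E at *
  generalize (Nat.factorial k : ℂ) = F at *
  rw [show (2 * (k + 1) * (2 * k + 1) * (k - 3 * n) : ℂ) =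
    4 * ((k + 1) * (1 / 2 + k) * (-(3 * n) + k)) by ring]
  generalize (1 / 2 + k : ℂ) = u at *
  generalize (-(3 * n) + k : ℂ) = v at *
  field_simp
  ring

theorem gosperTerm_succ_left (a : ℂ) {n k : ℕ} (h : k ≤ n) :
    gosperTerm a (n + 1) k * (3 * (n + 1 - k) * (3 * n + 1) * (3 * n + 2)) =
      gosperTerm a n k * ((3 * n + 1 - k) * (3 * n + 2 - k) * (3 * n + 3 - k)) := by
  have hf : (Nat.factorial k : ℂ) ≠ 0 := Nat.cast_ne_zero.2 k.factorial_ne_zero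
  have hd := poch_half_ne_zero k
  have he := poch_neg_three_mul_ne_zero h
  have he' := poch_neg_three_mul_ne_zero (n := n + 1) (k := k) (by omega)
  have h3 : (n : ℂ) + 1 ≠ 0 := Nat.cast_add_one_ne_zero n
  have r0 := poch_mul_add (-((n + 1 : ℕ) : ℂ)) k
  have r1 := poch_mul_add (-(3 * (n + 1 : ℕ) : ℂ)) k
  have r2 := poch_mul_add (-(3 * (n + 1 : ℕ) : ℂ) + 1) k
  have r3 := poch_mul_add (-(3 * (n + 1 : ℕ) : ℂ) + 1 + 1) k
  rw [show -((n + 1 : ℕ) : ℂ) + 1 = -n by push_cast; ring] at r0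
  rw [show -(3 * (n + 1 : ℕ) : ℂ) + 1 + 1 + 1 = -(3 * n) by push_cast; ring] at r3
  unfold gosperTerm
  generalize poch (1 / 2) k = D at *
  generalize poch (-(3 * n : ℂ)) k = E at *
  generalize poch (-(3 * (n + 1 : ℕ) : ℂ)) k = E' at *
  generalize poch (-(3 * (n + 1 : ℕ) : ℂ) + 1) k = E₁ at *
  generalize poch (-(3 * (n + 1 : ℕ) : ℂ) + 1 + 1) k = E₂ at *
  generalize poch (-(n : ℂ)) k = N at *
  generalize poch (-((n + 1 : ℕ) : ℂ)) k = N' at *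
  generalize (Nat.factorial k : ℂ) = F at *
  push_cast at r0 r1 r2 r3
  have rE : E' * ((3 * n + 1 - k) * (3 * n + 2 - k) * (3 * n + 3 - k)) =
      3 * (n + 1) * (3 * n + 1) * (3 * n + 2) * E := by
    linear_combination (-(3 * n + 1 - k) * (3 * n + 2 - k) : ℂ) * r1
      - (3 * (n + 1) * (3 * n + 1 - k) : ℂ) * r2 - (3 * (n + 1) * (3 * n + 2) : ℂ) * r3
  field_simp
  linear_combination poch a k * poch (1 - a) k *
    ((-3 * E * (3 * n + 1) * (3 * n + 2) : ℂ) * r0 - N * rE)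

theorem sum_gosperTerm_succ_sub (a : ℂ) (n m : ℕ) (h : m ≤ n) :
    ∑ k ∈ Finset.range (m + 1), ((3 * n + 1) * (3 * n + 2) * gosperTerm a (n + 1) k
      - (3 * n + 1 + a) * (3 * n + 2 - a) * gosperTerm a n k) =
      -((a + m) * (1 - a + m) * gosperTerm a n m) := by
  induction m with
  | zero =>
    simp only [zero_add, Finset.sum_range_one, gosperTerm_zero, Nat.cast_zero]
    ring
  | succ m ih =>
    rw [Finset.sum_range_succ, ih (by omega)]
    have h1 := gosperTerm_succ_right a h
    have h2 := gosperTerm_succ_left a h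
    have h3 : (n - m : ℂ) ≠ 0 := by
      rw [sub_ne_zero]
      exact_mod_cast (by omega : n ≠ m)
    push_cast at h2 ⊢
    apply mul_left_cancel₀ (mul_ne_zero (three_ne_zero (α := ℂ)) h3)
    linear_combination h2 - h1

/-- Gosper's strange evaluation of `₃F₂(a, 1 - a, -n; 1/2, -3n; 3/4)`. -/
theorem sum_gosperTerm (a : ℂ) (n : ℕ) :
    ∑ k ∈ Finset.range (n + 1), gosperTerm a n k =
      (poch (1 / 3 + a / 3) n * poch (2 / 3 - a / 3) n) / (poch (1 / 3) n * poch (2 / 3) n) := by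
  induction n with
  | zero => simp [gosperTerm_zero, poch_zero]
  | succ n ih =>
    have hs := sum_gosperTerm_succ_sub a n n le_rfl
    rw [Finset.sum_sub_distrib, ← Finset.mul_sum, ← Finset.mul_sum, ih] at hs
    have h1 := gosperTerm_succ_right a (le_refl (n + 1))
    have h2 := gosperTerm_succ_left a (le_refl n)
    have e1 : (3 * n + 1 : ℂ) ≠ 0 := by exact_mod_cast (by omega : 3 * n + 1 ≠ 0)
    have e2 : (3 * n + 2 : ℂ) ≠ 0 := by exact_mod_cast (by omega : 3 * n + 2 ≠ 0)
    have e3 : (2 * n + 1 : ℂ) ≠ 0 := by exact_mod_cast (by omega : 2 * n + 1 ≠ 0)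
    have e4 : (2 * n + 3 : ℂ) ≠ 0 := by exact_mod_cast (by omega : 2 * n + 3 ≠ 0)
    have e5 : (n + 1 : ℂ) ≠ 0 := Nat.cast_add_one_ne_zero n
    have hlast : (3 * n + 1) * (3 * n + 2) * gosperTerm a (n + 1) (n + 1) =
        (a + n) * (1 - a + n) * gosperTerm a n n := by
      push_cast at h1
      apply mul_left_cancel₀
        (mul_ne_zero (mul_ne_zero (mul_ne_zero two_ne_zero e5) e3) e4)
      linear_combination (-(3 * n + 1) * (3 * n + 2) : ℂ) * h1 + (a + n) * (1 - a + n) * h2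
    rw [Finset.sum_range_succ]
    have q1 := poch_third_ne_zero n
    have q2 := poch_two_thirds_ne_zero n
    have e1' : (1 / 3 + n : ℂ) ≠ 0 := fun h0 => e1 (by linear_combination 3 * h0)
    have e2' : (2 / 3 + n : ℂ) ≠ 0 := fun h0 => e2 (by linear_combination 3 * h0)
    have hr : poch (1 / 3 + a / 3) (n + 1) * poch (2 / 3 - a / 3) (n + 1) /
        (poch (1 / 3) (n + 1) * poch (2 / 3) (n + 1)) * ((3 * n + 1) * (3 * n + 2)) =
        poch (1 / 3 + a / 3) n * poch (2 / 3 - a / 3) n / (poch (1 / 3) n * poch (2 / 3) n) *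
          ((3 * n + 1 + a) * (3 * n + 2 - a)) := by
      simp only [poch_succ]
      rw [show (3 * n + 1 : ℂ) = 3 * (1 / 3 + n) by ring,
        show (3 * n + 2 : ℂ) = 3 * (2 / 3 + n) by ring]
      generalize poch (1 / 3) n = A at *
      generalize poch (2 / 3) n = B at *
      rw [show (1 / 3 + a / 3 + n : ℂ) = (3 * (1 / 3 + n) + a) / 3 by ring,
        show (2 / 3 - a / 3 + n : ℂ) = (3 * (2 / 3 + n) - a) / 3 by ring]
      generalize (1 / 3 + n : ℂ) = u at *
      generalize (2 / 3 + n : ℂ) = v at *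
      field_simp
    apply mul_left_cancel₀ (mul_ne_zero e1 e2)
    linear_combination hs + hlast - hr

theorem poch_contiguous (a : ℂ) (k : ℕ) :
    2 * (1 - 2 * k) * (poch a k * poch (-1 - a) k) =
      (1 + a) * (poch a k * poch (1 - a) k) + poch (a + 1) k * poch (-a) k
        - a * (poch (a + 2) k * poch (-1 - a) k) := by
  cases k with
  | zero =>
    simp only [poch_zero, Nat.cast_zero]
    ring
  | succ j =>
    have p1 := poch_succ' a j
    have p2 := poch_succ (a + 1) j
    have p3 := poch_mul_add (a + 1) (j + 1)
    have q1 := poch_succ' (-1 - a) j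
    have q2 := poch_succ (-a) j
    have q3 := poch_mul_add (-a) (j + 1)
    rw [show a + 1 + 1 = a + 2 by ring] at p3
    rw [show -1 - a + 1 = -a by ring] at q1
    rw [show -a + 1 = 1 - a by ring] at q3
    rw [p2] at p3
    rw [q2] at q3
    rw [p1, p2, q1, q2]
    push_cast at p3 q3 ⊢
    linear_combination a * poch (-a) j * p3 - (1 + a) * poch (a + 1) j * q3

theorem gosper_related_term (a : ℂ) (n k : ℕ) :
    (poch a k * poch (-1 - a) k * poch (-(n : ℂ)) k) /
        ((Nat.factorial k : ℂ) * poch (-1 / 2) k * poch (-(3 * n : ℂ)) k) * (3 / 4 : ℂ) ^ k =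
      (1 + a) / 2 * gosperTerm a n k + 1 / 2 * gosperTerm (a + 1) n k
        - a / 2 * gosperTerm (a + 2) n k := by
  have h := poch_contiguous a k
  have hh := poch_neg_half_mul k
  have hd := poch_half_ne_zero k
  rw [← hh] at hd
  have h1 := left_ne_zero_of_mul hd
  have h2 := right_ne_zero_of_mul hd
  unfold gosperTerm
  rw [show 1 - (a + 1) = -a by ring, show 1 - (a + 2) = -1 - a by ring, ← hh]
  have key : poch a k * poch (-1 - a) k / poch (-1 / 2) k =
      ((1 + a) * (poch a k * poch (1 - a) k) + poch (a + 1) k * poch (-a) k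
        - a * (poch (a + 2) k * poch (-1 - a) k)) / (2 * (poch (-1 / 2) k * (1 - 2 * k))) := by
    rw [← h]
    field_simp
  generalize (1 - 2 * k : ℂ) = u at *
  linear_combination poch (-(n : ℂ)) k / (Nat.factorial k * poch (-(3 * n : ℂ)) k) *
    (3 / 4 : ℂ) ^ k * key

theorem gosper_related_ell_one (n : ℕ) (x : ℂ)
    (h1 : 1 + 6*x ≠ 0) (h2 : 2 + 6*x ≠ 0) :
    ∑ k ∈ Finset.range (n+1),
      (poch (3*x) k * poch (-1 - 3*x) k * poch (-(n : ℂ)) k) /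
        ((Nat.factorial k : ℂ) * poch (-1/2) k * poch (-(3*n : ℂ)) k) * (3/4 : ℂ)^k
      = (1 + 3*x)/2 * ((poch (1/3 + x) n * poch (2/3 - x) n) / (poch (1/3) n * poch (2/3) n))
        + (1/2 : ℂ) * ((poch (2/3 + x) n * poch (1/3 - x) n) / (poch (1/3) n * poch (2/3) n))
        - 3*x/2 * ((poch (1 + x) n * poch (-x) n) / (poch (1/3) n * poch (2/3) n)) := by
  simp only [gosper_related_term, Finset.sum_sub_distrib, Finset.sum_add_distrib,
    ← Finset.mul_sum, sum_gosperTerm]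
  rw [show 3 * x / 3 = x by ring, show 1 / 3 + (3 * x + 1) / 3 = 2 / 3 + x by ring,
    show 2 / 3 - (3 * x + 1) / 3 = 1 / 3 - x by ring,
    show 1 / 3 + (3 * x + 2) / 3 = 1 + x by ring, show 2 / 3 - (3 * x + 2) / 3 = -x by ring]
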